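/- If there is an on-line algorithm partitioning every regular poset of width w into at most r(w) chains, then there is an on-line algorithm partitioning every poset of width w into at most w·r(w) chains; i.e., val(w) ≤ w·regval(w). -/

import Mathlib

/-- The restriction of a poset on `ℕ` to the elements presented up to time `n`. -/
def truncRel (r : ℕ → ℕ → Prop) (n : ℕ) : ℕ → ℕ → Prop :=
  fun a b => a ≤ n ∧ b ≤ n ∧ r a b

/-- The poset `(ℕ, r)` has width at most `w`. -/
def HasWidthLE (r : ℕ → ℕ → Prop) (w : ℕ) : Prop :=
  ∀ A : Finset ℕ, (∀ i ∈ A, ∀ j ∈ A, i ≠ j → ¬ r i j ∧ ¬ r j i) → A.card ≤ w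

/-- `col` is a partition of the poset `(ℕ, r)` into at most `k` chains. -/
def IsChainCol (r : ℕ → ℕ → Prop) (col : ℕ → ℕ) (k : ℕ) : Prop :=
  (∀ i, col i < k) ∧ ∀ i j, col i = col j → r i j ∨ r j i ∨ i = j

/-- An on-line chain partitioning algorithm `A` (the chain of element `i` depends
only on the poset restricted to the elements `0,…,i`) partitioning every poset of
width at most `w` into at most `k` chains. -/
def SolvesOnline (A : (ℕ → ℕ → Prop) → ℕ → ℕ) (w k : ℕ) : Prop :=
  ∀ r : ℕ → ℕ → Prop, IsPartialOrder ℕ r → HasWidthLE r w →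
    IsChainCol r (fun i => A (truncRel r i) i) k

/-- The `t`-th round (antichain `A_t`) of a regular presentation of width `w`:
elements `t·w, …, (t+1)·w − 1`. -/
def Level (w t : ℕ) : Finset ℕ := Finset.Ico (t * w) ((t + 1) * w)

/-- `A_s ⊑ A_t` : every element of level `s` is below some element of level `t`. -/
def SqBelow (r : ℕ → ℕ → Prop) (w s t : ℕ) : Prop :=
  ∀ i ∈ Level w s, ∃ j ∈ Level w t, r i j

/-- A regular poset of width `w`, presented round by round as a sequence of
maximum antichains (the levels): the levels are antichains of size `w` forming a
linear order under `⊑` with level `0` minimum and level `1` maximum, levels `0`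
and `1` induce a complete bipartite poset, and at every stage `T` of the
presentation any two `⊑`-consecutive levels induce a regular bipartite poset
(every comparability edge extends to a perfect matching). -/
def IsRegularPresentation (r : ℕ → ℕ → Prop) (w : ℕ) : Prop :=
  HasWidthLE r w ∧
  (∀ t, ∀ i ∈ Level w t, ∀ j ∈ Level w t, i ≠ j → ¬ r i j ∧ ¬ r j i) ∧
  (∀ s t, s ≠ t → SqBelow r w s t ∨ SqBelow r w t s) ∧
  (∀ t, t ≠ 0 → SqBelow r w 0 t) ∧
  (∀ t, t ≠ 1 → SqBelow r w t 1) ∧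
  (∀ i ∈ Level w 0, ∀ j ∈ Level w 1, r i j) ∧
  (∀ T p s, p ≤ T → s ≤ T → p ≠ s → SqBelow r w p s →
    (∀ q ≤ T, q ≠ p → q ≠ s → ¬ (SqBelow r w p q ∧ SqBelow r w q s)) →
    ∀ i, ∀ hi : i ∈ Level w p, ∀ j, ∀ hj : j ∈ Level w s, r i j →
      ∃ f : {a // a ∈ Level w p} → {b // b ∈ Level w s},
        Function.Bijective f ∧ (∀ a : {a // a ∈ Level w p}, r a.1 (f a).1) ∧ f ⟨i, hi⟩ = ⟨j, hj⟩)

/-- An on-line chain partitioning algorithm for regular posets: the chain of an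
element may depend on everything presented up to the end of its round. -/
def SolvesRegular (B : (ℕ → ℕ → Prop) → ℕ → ℕ) (w k : ℕ) : Prop :=
  ∀ r : ℕ → ℕ → Prop, IsPartialOrder ℕ r → IsRegularPresentation r w →
    IsChainCol r (fun i => B (truncRel r ((i / w + 1) * w - 1)) i) k

namespace OC

section generic
variable {X : Type}

/-- `A` is an antichain. -/
def AC (q : X → X → Prop) (A : Finset X) : Prop := ∀ a ∈ A, ∀ b ∈ A, q a b → a = b

/-- partial order axioms -/
structure PO (q : X → X → Prop) : Prop where
  refl : ∀ a, q a a
  trans : ∀ a b c, q a b → q b c → q a c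
  antisymm : ∀ a b, q a b → q b a → a = b

/-- the width of `q` on `D` is at most `w` -/
def Wd (q : X → X → Prop) (D : X → Prop) (w : ℕ) : Prop :=
  ∀ A : Finset X, (∀ a ∈ A, D a) → AC q A → A.card ≤ w

/-- `A` is a maximum antichain -/
structure MA (q : X → X → Prop) (D : X → Prop) (w : ℕ) (A : Finset X) : Prop where
  sub : ∀ a ∈ A, D a
  card : A.card = w
  ac : AC q A

/-- domination order -/
def Sq (q : X → X → Prop) (A B : Finset X) : Prop := ∀ a ∈ A, ∃ b ∈ B, q a b

/-- comparability in the domination order -/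
def Cmp (q : X → X → Prop) (A B : Finset X) : Prop := Sq q A B ∨ Sq q B A

variable {q : X → X → Prop} {D : X → Prop} {w : ℕ}

theorem AC.flip {A : Finset X} (h : AC q A) : AC (flip q) A :=
  fun a ha b hb hab => (h b hb a ha hab).symm

theorem PO.flip (h : PO q) : PO (flip q) :=
  ⟨h.refl, fun a b c h1 h2 => h.trans c b a h2 h1, fun a b h1 h2 => h.antisymm a b h2 h1⟩

theorem Wd.flip (h : Wd q D w) : Wd (flip q) D w :=
  fun A hA hac => h A hA (AC.flip hac)

theorem MA.flip {A : Finset X} (h : MA q D w A) : MA (flip q) D w A :=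
  ⟨h.sub, h.card, h.ac.flip⟩

theorem exists_comp (hq : PO q) (hw : Wd q D w) {E : Finset X} (hE : MA q D w E) {x : X}
    (hx : D x) : ∃ e ∈ E, q x e ∨ q e x := by
  classical
  by_contra hcon
  push Not at hcon
  have hxE : x ∉ E := fun h => (hcon x h).1 (hq.refl x)
  have := hw (insert x E) (by
    intro a ha
    rcases Finset.mem_insert.1 ha with rfl | ha
    · exact hx
    · exact hE.sub a ha) (by
    intro a ha b hb hab
    rcases Finset.mem_insert.1 ha with ha' | ha' <;> rcases Finset.mem_insert.1 hb with hb' | hb'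
    · rw [ha', hb']
    · rw [ha'] at hab
      exact absurd hab (hcon b hb').1
    · rw [hb'] at hab
      exact absurd hab (hcon a ha').2
    · exact hE.ac a ha' b hb' hab)
  rw [Finset.card_insert_of_notMem hxE, hE.card] at this
  omega

theorem sq_up (hq : PO q) (hw : Wd q D w) {A B : Finset X} (hA : MA q D w A) (hB : MA q D w B)
    (h : Sq q A B) : Sq (flip q) B A := by
  intro b hb
  obtain ⟨a, ha, h1 | h1⟩ := exists_comp hq hw hA (hB.sub b hb)
  · obtain ⟨b', hb', h2⟩ := h a ha
    have := hB.ac b hb b' hb' (hq.trans _ _ _ h1 h2)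
    subst this
    exact ⟨a, ha, h2⟩
  · exact ⟨a, ha, h1⟩

theorem sq_flip (hq : PO q) (hw : Wd q D w) {A B : Finset X} (hA : MA q D w A)
    (hB : MA q D w B) : Sq (flip q) B A ↔ Sq q A B :=
  ⟨fun h => sq_up hq.flip hw.flip hB.flip hA.flip h, sq_up hq hw hA hB⟩

theorem cmp_flip (hq : PO q) (hw : Wd q D w) {A B : Finset X} (hA : MA q D w A)
    (hB : MA q D w B) : Cmp (flip q) A B ↔ Cmp q A B := by
  unfold Cmp
  rw [sq_flip hq hw hA hB, sq_flip hq hw hB hA, or_comm]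

theorem sq_antisymm (hq : PO q) {A B : Finset X} (hA : AC q A) (hB : AC q B)
    (h1 : Sq q A B) (h2 : Sq q B A) : A = B := by
  have key : ∀ {A B : Finset X}, AC q A → Sq q A B → Sq q B A → A ⊆ B := by
    intro A B hA h1 h2 a ha
    obtain ⟨b, hb, hab⟩ := h1 a ha
    obtain ⟨a', ha', hba⟩ := h2 b hb
    have := hA a ha a' ha' (hq.trans _ _ _ hab hba)
    subst this
    rw [hq.antisymm _ _ hab hba]
    exact hb
  exact Finset.Subset.antisymm (key hA h1 h2) (key hB h2 h1)

theorem sq_trans (hq : PO q) {A B C : Finset X} (h1 : Sq q A B) (h2 : Sq q B C) : Sq q A C := by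
  intro a ha
  obtain ⟨b, hb, hab⟩ := h1 a ha
  obtain ⟨c, hc, hbc⟩ := h2 b hb
  exact ⟨c, hc, hq.trans _ _ _ hab hbc⟩

open Classical in
/-- minimal elements of the union -/
noncomputable def mn (q : X → X → Prop) (A E : Finset X) : Finset X :=
  (A ∪ E).filter (fun a => ∀ b ∈ A ∪ E, q b a → b = a)

open Classical in
theorem mem_mn {A E : Finset X} {a : X} :
    a ∈ mn q A E ↔ (a ∈ A ∨ a ∈ E) ∧ ∀ b, b ∈ A ∨ b ∈ E → q b a → b = a := by
  simp only [mn, Finset.mem_filter, Finset.mem_union]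

theorem mn_ac (A E : Finset X) : AC q (mn q A E) := by
  intro a ha b hb hab
  exact (mem_mn.1 hb).2 a (mem_mn.1 ha).1 hab

theorem mn_ma (hq : PO q) (hw : Wd q D w) {A E : Finset X} (hA : MA q D w A)
    (hE : MA q D w E) : MA q D w (mn q A E) := by
  classical
  have sub1 : ∀ a ∈ mn q A E, D a := fun a ha =>
    (mem_mn.1 ha).1.elim (hA.sub a) (hE.sub a)
  have sub2 : ∀ a ∈ mn (flip q) A E, D a := fun a ha =>
    (mem_mn.1 ha).1.elim (hA.sub a) (hE.sub a)
  have c1 := hw _ sub1 (mn_ac A E)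
  have c2 := hw _ sub2 (AC.flip (mn_ac (q := flip q) A E))
  have u : A ∪ E ⊆ mn q A E ∪ mn (flip q) A E := by
    intro a ha
    rw [Finset.mem_union] at ha ⊢
    by_contra hcon
    push Not at hcon
    obtain ⟨h1, h2⟩ := hcon
    rw [mem_mn] at h1 h2
    push Not at h1 h2
    obtain ⟨b, hb, hba, hne⟩ := h1 ha
    obtain ⟨c, hc, hac, hne2⟩ := h2 ha
    have hac : q a c := hac
    have hbc := hq.trans _ _ _ hba hac
    have key : ∀ {A E : Finset X}, AC q A → AC q E → a ∈ A → (b ∈ A ∨ b ∈ E) →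
        (c ∈ A ∨ c ∈ E) → False := by
      intro A E hA hE ha hb hc
      have hb : b ∈ E := hb.resolve_left fun h => hne (hA _ h _ ha hba)
      have hc : c ∈ E := hc.resolve_left fun h => hne2 (hA _ ha _ h hac).symm
      have := hE _ hb _ hc hbc
      subst this
      exact hne (hq.antisymm _ _ hba hac)
    rcases ha with ha | ha
    · exact key hA.ac hE.ac ha hb hc
    · exact key hE.ac hA.ac ha hb.symm hc.symm
  have i : A ∩ E ⊆ mn q A E ∩ mn (flip q) A E := by
    intro a ha
    obtain ⟨h1, h2⟩ := Finset.mem_inter.1 ha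
    rw [Finset.mem_inter, mem_mn, mem_mn]
    refine ⟨⟨Or.inl h1, ?_⟩, ⟨Or.inl h1, ?_⟩⟩
    · rintro b (hb | hb) hba
      · exact hA.ac _ hb _ h1 hba
      · exact hE.ac _ hb _ h2 hba
    · rintro b (hb | hb) hba
      · exact (hA.ac _ h1 _ hb hba).symm
      · exact (hE.ac _ h2 _ hb hba).symm
  have e1 := Finset.card_le_card u
  have e2 := Finset.card_le_card i
  have e3 := Finset.card_union_add_card_inter A E
  have e4 := Finset.card_union_add_card_inter (mn q A E) (mn (flip q) A E)
  have := hA.card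
  have := hE.card
  exact ⟨sub1, by omega, mn_ac A E⟩

theorem mn_le_left (hq : PO q) {A E : Finset X} (hA : AC q A) (hE : AC q E) :
    Sq (flip q) A (mn q A E) := by
  intro a ha
  by_cases h : a ∈ mn q A E
  · exact ⟨a, h, hq.refl a⟩
  · rw [mem_mn] at h
    push Not at h
    obtain ⟨b, hb, hba, hne⟩ := h (Or.inl ha)
    have hbE : b ∈ E := hb.resolve_left fun h => hne (hA _ h _ ha hba)
    refine ⟨b, mem_mn.2 ⟨hb, ?_⟩, hba⟩
    rintro c (hc | hc) hcb
    · have := hA _ hc _ ha (hq.trans _ _ _ hcb hba)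
      subst this
      exact hq.antisymm _ _ hcb hba
    · exact hE _ hc _ hbE hcb

theorem mn_comm (A E : Finset X) : mn q A E = mn q E A := by
  ext a
  rw [mem_mn, mem_mn]
  constructor
  · rintro ⟨h, h'⟩
    exact ⟨h.symm, fun b hb => h' b hb.symm⟩
  · rintro ⟨h, h'⟩
    exact ⟨h.symm, fun b hb => h' b hb.symm⟩

theorem insert_step (hq : PO q) (hw : Wd q D w) {A E : Finset X} (hA : MA q D w A)
    (hE : MA q D w E) {x e : X} (hx : x ∈ A) (he : e ∈ E) (hxe : q x e) :
    ∃ M, MA q D w M ∧ x ∈ M ∧ Cmp q M E ∧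
      ∀ F, MA q D w F → Cmp q A F → Cmp q E F → Cmp q M F := by
  have hM := mn_ma hq hw hA hE
  have l1 : Sq q (mn q A E) A := (sq_flip hq hw hM hA).1 (mn_le_left hq hA.ac hE.ac)
  have l2 : Sq q (mn q A E) E := by
    refine (sq_flip hq hw hM hE).1 ?_
    rw [mn_comm]
    exact mn_le_left hq hE.ac hA.ac
  refine ⟨mn q A E, hM, ?_, Or.inl l2, ?_⟩
  · rw [mem_mn]
    refine ⟨Or.inl hx, ?_⟩
    rintro b (hb | hb) hbx
    · exact hA.ac _ hb _ hx hbx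
    · have := hE.ac _ hb _ he (hq.trans _ _ _ hbx hxe)
      subst this
      exact hq.antisymm _ _ hbx hxe
  · intro F hF h1 h2
    rcases h1 with h1 | h1
    · exact Or.inl (sq_trans hq l1 h1)
    rcases h2 with h2 | h2
    · exact Or.inl (sq_trans hq l2 h2)
    refine Or.inr ((sq_flip hq hw hF hM).1 ?_)
    have h1 := (sq_flip hq hw hF hA).2 h1
    have h2 := (sq_flip hq hw hF hE).2 h2
    intro m hm
    exact (mem_mn.1 hm).1.elim (h1 m) (h2 m)

theorem insertion (hq : PO q) (hw : Wd q D w) (L : ℕ → Finset X) {A : Finset X}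
    (hA : MA q D w A) {x : X} (hx : x ∈ A) (N : ℕ) (hL : ∀ t < N, MA q D w (L t))
    (hc : ∀ s < N, ∀ t < N, Cmp q (L s) (L t)) :
    ∃ M, MA q D w M ∧ x ∈ M ∧ ∀ t < N, Cmp q M (L t) := by
  induction N with
  | zero => exact ⟨A, hA, hx, by simp⟩
  | succ N ih =>
    obtain ⟨M, hM, hxM, hMc⟩ := ih (fun t ht => hL t (by omega))
      (fun s hs t ht => hc s (by omega) t (by omega))
    have hE := hL N (by omega)
    obtain ⟨e, he, h | h⟩ := exists_comp hq hw hE (hA.sub x hx)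
    · obtain ⟨M', h1, h2, h3, h4⟩ := insert_step hq hw hM hE hxM he h
      refine ⟨M', h1, h2, fun t ht => ?_⟩
      rcases Nat.lt_succ_iff_lt_or_eq.1 ht with ht | rfl
      · exact h4 _ (hL t (by omega)) (hMc t ht) (hc N (by omega) t (by omega))
      · exact h3
    · obtain ⟨M', h1, h2, h3, h4⟩ := insert_step hq.flip hw.flip hM.flip hE.flip hxM he h
      have h1 : MA q D w M' := h1.flip
      refine ⟨M', h1, h2, fun t ht => ?_⟩
      rcases Nat.lt_succ_iff_lt_or_eq.1 ht with ht | rfl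
      · have hLt := hL t (by omega)
        exact (cmp_flip hq hw h1 hLt).1 (h4 _ hLt.flip ((cmp_flip hq hw hM hLt).2 (hMc t ht))
          ((cmp_flip hq hw hE hLt).2 (hc N (by omega) t (by omega))))
      · exact (cmp_flip hq hw h1 hE).1 h3

/-- `x ↦ y` extends to a perfect matching. -/
def PM (q : X → X → Prop) (A B : Finset X) (x y : X) : Prop :=
  ∃ f : X → X, (∀ a ∈ A, f a ∈ B ∧ q a (f a)) ∧ Set.InjOn f A ∧ f x = y

theorem PM.trans (hq : PO q) {A B C : Finset X} {x y z : X} (h1 : PM q A B x y)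
    (h2 : PM q B C y z) : PM q A C x z := by
  obtain ⟨f, hf, hfi, rfl⟩ := h1
  obtain ⟨g, hg, hgi, rfl⟩ := h2
  refine ⟨fun a => g (f a), fun a ha => ⟨(hg _ (hf a ha).1).1,
    hq.trans _ _ _ (hf a ha).2 (hg _ (hf a ha).1).2⟩, ?_, rfl⟩
  intro a ha b hb hab
  exact hfi ha hb (hgi (hf a ha).1 (hf b hb).1 hab)

theorem hall (hq : PO q) (hw : Wd q D w) {A B : Finset X} (hA : MA q D w A) (hB : MA q D w B)
    (h : Sq q A B) : ∃ f : X → X, (∀ a ∈ A, f a ∈ B ∧ q a (f a)) ∧ Set.InjOn f A := by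
  classical
  obtain ⟨f, hfi, hf⟩ := (Finset.all_card_le_biUnion_card_iff_exists_injective
    (fun a : {a // a ∈ A} => B.filter (fun b => q a.1 b))).1 (by
    intro S
    set N := S.biUnion (fun a : {a // a ∈ A} => B.filter (fun b => q a.1 b)) with hN
    have memN : ∀ b, b ∈ N ↔ b ∈ B ∧ ∃ a ∈ S, q a.1 b := by
      intro b
      simp only [hN, Finset.mem_biUnion, Finset.mem_filter]
      constructor
      · rintro ⟨a, h1, h2, h3⟩
        exact ⟨h2, a, h1, h3⟩
      · rintro ⟨h2, a, h1, h3⟩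
        exact ⟨a, h1, h2, h3⟩
    have hNB : N ⊆ B := fun b hb => ((memN b).1 hb).1
    have key := hw ((B \ N) ∪ S.map (Function.Embedding.subtype _)) (by
      intro a ha
      rcases Finset.mem_union.1 ha with ha | ha
      · exact hB.sub a (Finset.mem_sdiff.1 ha).1
      · obtain ⟨a, -, rfl⟩ := Finset.mem_map.1 ha
        exact hA.sub _ a.2) (by
      intro a ha b hb hab
      rcases Finset.mem_union.1 ha with ha | ha <;> rcases Finset.mem_union.1 hb with hb | hb
      · exact hB.ac _ (Finset.mem_sdiff.1 ha).1 _ (Finset.mem_sdiff.1 hb).1 hab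
      · exfalso
        obtain ⟨b, hbS, rfl⟩ := Finset.mem_map.1 hb
        obtain ⟨c, hc, hbc⟩ := h _ b.2
        have := hB.ac _ (Finset.mem_sdiff.1 ha).1 _ hc (hq.trans _ _ _ hab hbc)
        subst this
        exact (Finset.mem_sdiff.1 ha).2 ((memN _).2 ⟨hc, b, hbS, hbc⟩)
      · exfalso
        obtain ⟨a, haS, rfl⟩ := Finset.mem_map.1 ha
        exact (Finset.mem_sdiff.1 hb).2 ((memN _).2 ⟨(Finset.mem_sdiff.1 hb).1, a, haS, hab⟩)
      · obtain ⟨a, haS, rfl⟩ := Finset.mem_map.1 ha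
        obtain ⟨b, hbS, rfl⟩ := Finset.mem_map.1 hb
        exact hA.ac _ a.2 _ b.2 hab)
    rw [Finset.card_union_of_disjoint, Finset.card_map, Finset.card_sdiff_of_subset hNB,
      hB.card] at key
    · have := Finset.card_le_card hNB
      rw [hB.card] at this
      omega
    · rw [Finset.disjoint_left]
      intro a ha ha'
      obtain ⟨a, haS, rfl⟩ := Finset.mem_map.1 ha'
      exact (Finset.mem_sdiff.1 ha).2 ((memN _).2 ⟨(Finset.mem_sdiff.1 ha).1, a, haS, hq.refl _⟩))
  refine ⟨fun x => if hx : x ∈ A then f ⟨x, hx⟩ else x, ?_, ?_⟩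
  · intro a ha
    have := hf ⟨a, ha⟩
    rw [Finset.mem_filter] at this
    simpa [ha] using this
  · intro a ha b hb hab
    have ha : a ∈ A := ha
    have hb : b ∈ A := hb
    simp only [ha, hb, dif_pos] at hab
    simpa using hfi hab

end generic

section pres
set_option linter.unusedSectionVars false
variable {X : Type} [Inhabited X]

/-- enumeration of a finset -/
noncomputable def enum (A : Finset X) (c : ℕ) : X :=
  if h : c < A.card then (A.equivFin.symm ⟨c, h⟩).1 else default

open Classical in
/-- position of an element in a finset -/
noncomputable def idx (A : Finset X) (x : X) : ℕ :=
  if h : x ∈ A then (A.equivFin ⟨x, h⟩ : ℕ) else 0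

theorem enum_mem {A : Finset X} {c : ℕ} (h : c < A.card) : enum A c ∈ A := by
  simp only [enum, h, dif_pos]
  exact (A.equivFin.symm ⟨c, h⟩).2

theorem idx_lt {A : Finset X} {x : X} (h : x ∈ A) : idx A x < A.card := by
  simp only [idx, h, dif_pos]
  exact (A.equivFin ⟨x, h⟩).2

theorem enum_idx {A : Finset X} {x : X} (h : x ∈ A) : enum A (idx A x) = x := by
  have h1 := idx_lt h
  simp only [enum, h1, dif_pos]
  simp [idx, h]

theorem idx_enum {A : Finset X} {c : ℕ} (h : c < A.card) : idx A (enum A c) = c := by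
  have h1 := enum_mem h
  simp only [idx, h1, dif_pos]
  simp [enum, h]

/-- point represented by the element `e` of the presentation -/
noncomputable def pt (w : ℕ) (L : ℕ → Finset X) (e : ℕ) : X := enum (L (e / w)) (e % w)

/-- the element of the presentation representing `x` in level `t` -/
noncomputable def el (w : ℕ) (L : ℕ → Finset X) (t : ℕ) (x : X) : ℕ := t * w + idx (L t) x

/-- strict linear order of levels -/
def LT (q : X → X → Prop) (L : ℕ → Finset X) (s t : ℕ) : Prop :=
  (Sq q (L s) (L t) ∧ L s ≠ L t) ∨ (L s = L t ∧ s < t)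

/-- the regular presentation -/
def RR (q : X → X → Prop) (w : ℕ) (L : ℕ → Finset X) (e e' : ℕ) : Prop :=
  e = e' ∨ (LT q L (e / w) (e' / w) ∧ PM q (L (e / w)) (L (e' / w)) (pt w L e) (pt w L e'))

/-- a sequence of levels -/
structure LS (q : X → X → Prop) (D : X → Prop) (w : ℕ) (L : ℕ → Finset X) : Prop where
  wpos : 0 < w
  po : PO q
  wd : Wd q D w
  ma : ∀ t, MA q D w (L t)
  cmp : ∀ s t, Cmp q (L s) (L t)
  bot : ∀ t, Sq q (L 0) (L t)
  top : ∀ t, Sq q (L t) (L 1)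
  top_ne : ∀ t, t ≠ 1 → L t ≠ L 1
  compl : ∀ x ∈ L 0, ∀ y ∈ L 1, q x y

variable {q : X → X → Prop} {D : X → Prop} {w : ℕ} {L : ℕ → Finset X}

theorem mem_Level (hw : 0 < w) {t e : ℕ} : e ∈ Level w t ↔ e / w = t := by
  rw [Level, Finset.mem_Ico, Nat.div_eq_iff hw]
  have : (t + 1) * w = t * w + w := by ring
  omega

section

theorem pt_mem (H : LS q D w L) (e : ℕ) : pt w L e ∈ L (e / w) :=
  enum_mem (by rw [(H.ma _).card]; exact Nat.mod_lt _ H.wpos)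

theorem el_div (H : LS q D w L) {t : ℕ} {x : X} (hx : x ∈ L t) : el w L t x / w = t := by
  have := idx_lt hx
  rw [(H.ma t).card] at this
  unfold el
  rw [mul_comm, Nat.mul_add_div H.wpos, Nat.div_eq_of_lt this, add_zero]

theorem pt_el (H : LS q D w L) {t : ℕ} {x : X} (hx : x ∈ L t) : pt w L (el w L t x) = x := by
  have := idx_lt hx
  rw [(H.ma t).card] at this
  unfold pt
  rw [el_div H hx]
  unfold el
  rw [mul_comm, Nat.mul_add_mod, Nat.mod_eq_of_lt this, enum_idx hx]

theorem el_pt (H : LS q D w L) (e : ℕ) : el w L (e / w) (pt w L e) = e := by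
  unfold el pt
  rw [idx_enum (by rw [(H.ma _).card]; exact Nat.mod_lt _ H.wpos), mul_comm]
  exact Nat.div_add_mod e w

theorem pt_inj (H : LS q D w L) {e e' : ℕ} (h : e / w = e' / w) (h' : pt w L e = pt w L e') : e = e' := by
  rw [← el_pt H e, ← el_pt H e', h, h']

theorem LT_irrefl (H : LS q D w L) (t : ℕ) : ¬ LT q L t t := by
  rintro (⟨_, h⟩ | ⟨_, h⟩)
  · exact h rfl
  · omega

theorem LT_sq (H : LS q D w L) {s t : ℕ} (h : LT q L s t) : Sq q (L s) (L t) := by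
  rcases h with h | h
  · exact h.1
  · rw [h.1]
    exact fun a ha => ⟨a, ha, H.po.refl a⟩

theorem LT_asymm (H : LS q D w L) {s t : ℕ} (h : LT q L s t) (h' : LT q L t s) : False := by
  have e := sq_antisymm H.po (H.ma s).ac (H.ma t).ac (LT_sq H h) (LT_sq H h')
  rcases h with h | h
  · exact h.2 e
  · rcases h' with h' | h'
    · exact h'.2 e.symm
    · omega

theorem LT_total (H : LS q D w L) {s t : ℕ} (h : s ≠ t) : LT q L s t ∨ LT q L t s := by
  by_cases e : L s = L t
  · rcases Nat.lt_or_gt_of_ne h with h | h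
    · exact Or.inl (Or.inr ⟨e, h⟩)
    · exact Or.inr (Or.inr ⟨e.symm, h⟩)
  · rcases H.cmp s t with h | h
    · exact Or.inl (Or.inl ⟨h, e⟩)
    · exact Or.inr (Or.inl ⟨h, fun h => e h.symm⟩)

theorem LT_trans (H : LS q D w L) {s t u : ℕ} (h : LT q L s t) (h' : LT q L t u) : LT q L s u := by
  by_cases e : L s = L u
  · have e1 := sq_antisymm H.po (H.ma s).ac (H.ma t).ac (LT_sq H h) (by
      rw [e]; exact LT_sq H h')
    rcases h with h | h
    · exact absurd e1 h.2
    · rcases h' with h' | h'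
      · exact absurd (e1.symm.trans e) h'.2
      · exact Or.inr ⟨e, h.2.trans h'.2⟩
  · exact Or.inl ⟨sq_trans H.po (LT_sq H h) (LT_sq H h'), e⟩

theorem LT_min (H : LS q D w L) (T : Finset ℕ) (hT : T.Nonempty) : ∃ s ∈ T, ∀ t ∈ T, t ≠ s → LT q L s t := by
  classical
  induction hT using Finset.Nonempty.cons_induction with
  | singleton a => exact ⟨a, by simp, by simp⟩
  | cons a T ha hT ih =>
    obtain ⟨s, hs, hmin⟩ := ih
    have hne : a ≠ s := fun h => ha (h ▸ hs)
    rcases LT_total H hne with h | h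
    · refine ⟨a, by simp, fun t ht hta => ?_⟩
      have ht : t ∈ T := (Finset.mem_cons.1 ht).resolve_left hta
      by_cases hts : t = s
      · exact hts ▸ h
      · exact LT_trans H h (hmin t ht hts)
    · refine ⟨s, by simp [hs], fun t ht hts => ?_⟩
      rcases Finset.mem_cons.1 ht with rfl | ht
      · exact h
      · exact hmin t ht hts

theorem RR_po (H : LS q D w L) : IsPartialOrder ℕ (RR q w L) :=
  { refl := fun _ => Or.inl rfl
    trans := by
      rintro a b c (rfl | ⟨h1, h2⟩) (rfl | ⟨h3, h4⟩)
      · exact Or.inl rfl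
      · exact Or.inr ⟨h3, h4⟩
      · exact Or.inr ⟨h1, h2⟩
      · exact Or.inr ⟨LT_trans H h1 h3, h2.trans H.po h4⟩
    antisymm := by
      rintro a b (rfl | ⟨h1, h2⟩) (h | ⟨h3, h4⟩)
      · rfl
      · rfl
      · exact h.symm
      · exact (LT_asymm H h1 h3).elim }

theorem match_nat (H : LS q D w L) {s t : ℕ} (h : LT q L s t) : ∃ g : ℕ → ℕ,
    (∀ e, e / w = s → g e / w = t ∧ RR q w L e (g e)) ∧
    (∀ e e', e / w = s → e' / w = s → g e = g e' → e = e') := by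
  obtain ⟨f, hf, hfi⟩ := hall H.po H.wd (H.ma s) (H.ma t) (LT_sq H h)
  have hm : ∀ e, e / w = s → pt w L e ∈ L s := fun e he => he ▸ pt_mem H e
  refine ⟨fun e => el w L t (f (pt w L e)), fun e he => ?_, fun e e' he he' hg => ?_⟩
  · have h1 := (hf _ (hm e he)).1
    refine ⟨el_div H h1, Or.inr ?_⟩
    rw [el_div H h1, pt_el H h1, he]
    exact ⟨h, f, hf, hfi, rfl⟩
  · have h1 := (hf _ (hm e he)).1
    have h2 := (hf _ (hm e' he')).1
    have := congrArg (pt w L) hg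
    simp only [pt_el H h1, pt_el H h2] at this
    exact pt_inj H (he.trans he'.symm) (hfi (hm e he) (hm e' he') this)

theorem RR_width (H : LS q D w L) : HasWidthLE (RR q w L) w := by
  classical
  have main : ∀ n : ℕ, ∀ T : Finset ℕ, T.card = n → ∀ S : Finset ℕ, (∀ e ∈ S, e / w ∈ T) →
      (∀ i ∈ S, ∀ j ∈ S, RR q w L i j → i = j) → S.card ≤ w := by
    intro n
    induction n with
    | zero =>
      intro T hT S hS _
      rw [Finset.card_eq_zero] at hT
      subst hT
      have : S = ∅ := Finset.eq_empty_of_forall_notMem fun e he => by simpa using hS e he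
      simp [this]
    | succ n ih =>
      intro T hT S hS hac
      obtain ⟨s, hs, hmin⟩ := LT_min H T (Finset.card_pos.1 (by omega))
      rcases (T.erase s).eq_empty_or_nonempty with h0 | h0
      · have : S ⊆ Level w s := by
          intro e he
          rw [mem_Level H.wpos]
          by_contra hne
          have : e / w ∈ T.erase s := Finset.mem_erase.2 ⟨hne, hS e he⟩
          simp [h0] at this
        have := Finset.card_le_card this
        have e : (s + 1) * w = s * w + w := by ring
        rw [Level, Nat.card_Ico, e] at this
        omega
      · obtain ⟨t, ht, -⟩ := LT_min H _ h0
        obtain ⟨t, ht, hmin2⟩ := LT_min H _ h0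
        have hst := hmin t (Finset.mem_of_mem_erase ht) (Finset.ne_of_mem_erase ht)
        obtain ⟨g, hg1, hg2⟩ := match_nat H hst
        let G : ℕ → ℕ := fun e => if e / w = s then g e else e
        have hGin : ∀ e, e / w = s → G e = g e := fun e he => by simp [G, he]
        have hGout : ∀ e, e / w ≠ s → G e = e := fun e he => by simp [G, he]
        have hGle : ∀ e, RR q w L e (G e) := by
          intro e
          by_cases he : e / w = s
          · rw [hGin e he]; exact (hg1 e he).2
          · rw [hGout e he]; exact Or.inl rfl
        have RRt : ∀ a b c, RR q w L a b → RR q w L b c → RR q w L a c := (RR_po H).trans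
        have hinj : Set.InjOn G S := by
          intro a ha b hb hab
          by_cases h1 : a / w = s <;> by_cases h2 : b / w = s
          · rw [hGin a h1, hGin b h2] at hab
            exact hg2 a b h1 h2 hab
          · apply hac a ha b hb
            rw [hGout b h2] at hab
            exact hab ▸ hGle a
          · symm
            apply hac b hb a ha
            rw [hGout a h1] at hab
            exact hab ▸ hGle b
          · rwa [hGout a h1, hGout b h2] at hab
        have hlev : ∀ e ∈ S, G e / w ∈ T.erase s := by
          intro e he
          by_cases h1 : e / w = s
          · rw [hGin e h1, (hg1 e h1).1]; exact ht
          · rw [hGout e h1]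
            exact Finset.mem_erase.2 ⟨h1, hS e he⟩
        rw [← Finset.card_image_of_injOn hinj]
        apply ih (T.erase s) (by rw [Finset.card_erase_of_mem hs]; omega)
        · intro e he
          obtain ⟨a, ha, rfl⟩ := Finset.mem_image.1 he
          exact hlev a ha
        · intro i hi j hj hij
          obtain ⟨a, ha, rfl⟩ := Finset.mem_image.1 hi
          obtain ⟨b, hb, rfl⟩ := Finset.mem_image.1 hj
          by_cases h2 : b / w = s
          · rcases hij with h | h
            · exact h
            · exfalso
              rw [hGin b h2, (hg1 b h2).1] at h
              by_cases h3 : G a / w = t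
              · exact LT_irrefl H t (h3 ▸ h.1)
              · exact LT_asymm H h.1 (hmin2 _ (hlev a ha) h3)
          · have := hac a ha b hb (by
              rw [hGout b h2] at hij
              exact RRt _ _ _ (hGle a) hij)
            rw [this]
  intro S hS
  refine main _ (S.image (· / w)) rfl S (fun e he => Finset.mem_image_of_mem _ he) ?_
  intro i hi j hj hij
  by_contra hne
  exact (hS i hi j hj hne).1 hij

theorem sqBelow_of_LT (H : LS q D w L) {s t : ℕ} (h : LT q L s t) : SqBelow (RR q w L) w s t := by
  intro i hi
  rw [mem_Level H.wpos] at hi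
  obtain ⟨g, hg, -⟩ := match_nat H h
  exact ⟨g i, (mem_Level H.wpos).2 (hg i hi).1, (hg i hi).2⟩

theorem LT_zero (H : LS q D w L) {t : ℕ} (ht : t ≠ 0) : LT q L 0 t := by
  by_cases e : L 0 = L t
  · exact Or.inr ⟨e, by omega⟩
  · exact Or.inl ⟨H.bot t, e⟩

theorem LT_one (H : LS q D w L) {t : ℕ} (ht : t ≠ 1) : LT q L t 1 := Or.inl ⟨H.top t, H.top_ne t ht⟩

theorem RR_regular (H : LS q D w L) : IsRegularPresentation (RR q w L) w := by
  classical
  have hw := H.wpos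
  refine ⟨RR_width H, ?_, ?_, fun t ht => sqBelow_of_LT H (LT_zero H ht),
    fun t ht => sqBelow_of_LT H (LT_one H ht), ?_, ?_⟩
  · have key : ∀ t, ∀ i ∈ Level w t, ∀ j ∈ Level w t, i ≠ j → ¬ RR q w L i j := by
      intro t i hi j hj hne hr
      rw [mem_Level hw] at hi hj
      rcases hr with h | ⟨h, -⟩
      · exact hne h
      · rw [hi, hj] at h
        exact LT_irrefl H t h
    exact fun t i hi j hj hne => ⟨key t i hi j hj hne, key t j hj i hi hne.symm⟩
  · intro s t hst
    rcases LT_total H hst with h | h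
    · exact Or.inl (sqBelow_of_LT H h)
    · exact Or.inr (sqBelow_of_LT H h)
  · intro i hi j hj
    rw [mem_Level hw] at hi hj
    have hlt := LT_zero H (t := 1) (by omega)
    obtain ⟨f, hf, hfi⟩ := hall H.po H.wd (H.ma 0) (H.ma 1) (LT_sq H hlt)
    have hi' : pt w L i ∈ L 0 := hi ▸ pt_mem H i
    have hj' : pt w L j ∈ L 1 := hj ▸ pt_mem H j
    refine Or.inr ?_
    rw [hi, hj]
    refine ⟨hlt, fun a => Equiv.swap (pt w L j) (f (pt w L i)) (f a), ?_, ?_, ?_⟩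
    · intro a ha
      have : Equiv.swap (pt w L j) (f (pt w L i)) (f a) ∈ L 1 := by
        rw [Equiv.swap_apply_def]
        split_ifs
        · exact (hf _ hi').1
        · exact hj'
        · exact (hf _ ha).1
      exact ⟨this, H.compl _ ha _ this⟩
    · intro a ha b hb hab
      exact hfi ha hb ((Equiv.swap _ _).injective hab)
    · exact Equiv.swap_apply_right _ _
  · intro T p s _ _ hps _ _ i hi j hj hij
    have hi' := (mem_Level hw).1 hi
    have hj' := (mem_Level hw).1 hj
    rcases hij with h | ⟨h1, h2⟩
    · exfalso
      rw [h] at hi'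
      exact hps (hi'.symm.trans hj')
    rw [hi', hj'] at h1 h2
    obtain ⟨f, hf, hfi, hfx⟩ := h2
    have hm : ∀ a : {a // a ∈ Level w p}, pt w L a.1 ∈ L p := fun a => by
      have h := pt_mem H a.1
      rwa [(mem_Level hw).1 a.2] at h
    have hd : ∀ a : {a // a ∈ Level w p}, el w L s (f (pt w L a.1)) / w = s := fun a =>
      el_div H (hf _ (hm a)).1
    refine ⟨fun a => ⟨el w L s (f (pt w L a.1)), (mem_Level hw).2 (hd a)⟩, ?_, ?_, ?_⟩
    · rw [Fintype.bijective_iff_injective_and_card]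
      constructor
      · intro a b hab
        have hab := congrArg (fun x : {b // b ∈ Level w s} => pt w L x.1) hab
        simp only [pt_el H (hf _ (hm a)).1, pt_el H (hf _ (hm b)).1] at hab
        apply Subtype.ext
        exact pt_inj H (((mem_Level hw).1 a.2).trans ((mem_Level hw).1 b.2).symm)
          (hfi (hm a) (hm b) hab)
      · have e : ∀ t, (t + 1) * w = t * w + w := fun t => by ring
        simp only [Fintype.card_coe, Level, Nat.card_Ico, e]
        omega
    · intro a
      refine Or.inr ?_
      simp only [hd a, pt_el H (hf _ (hm a)).1, (mem_Level hw).1 a.2]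
      exact ⟨h1, f, hf, hfi, rfl⟩
    · apply Subtype.ext
      have := el_pt H j
      rw [hj', ← hfx] at this
      exact this

theorem RR_imp (H : LS q D w L) {e e' : ℕ} (h : RR q w L e e') : q (pt w L e) (pt w L e') := by
  rcases h with rfl | ⟨-, f, hf, -, hx⟩
  · exact H.po.refl _
  · rw [← hx]
    exact (hf _ (pt_mem H e)).2

end

/-- the presentation only depends on the order among points of levels -/
theorem RR_congr {q q' : X → X → Prop} {w : ℕ} {L L' : ℕ → Finset X} {N : ℕ}
    (hL : ∀ t ≤ N, L t = L' t)
    (hq : ∀ s ≤ N, ∀ t ≤ N, ∀ a ∈ L s, ∀ b ∈ L t, (q a b ↔ q' a b)) {e e' : ℕ}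
    (he : e / w ≤ N) (he' : e' / w ≤ N) : RR q w L e e' ↔ RR q' w L' e e' := by
  have h1 := hL _ he
  have h2 := hL _ he'
  have hq := hq _ he _ he'
  unfold RR LT PM Sq pt
  rw [← h1, ← h2]
  have k1 : (∀ a ∈ L (e / w), ∃ b ∈ L (e' / w), q a b) ↔
      (∀ a ∈ L (e / w), ∃ b ∈ L (e' / w), q' a b) := by
    refine forall₂_congr fun a ha => exists_congr fun b => and_congr_right fun hb => hq a ha b hb
  have k2 : ∀ f : X → X, (∀ a ∈ L (e / w), f a ∈ L (e' / w) ∧ q a (f a)) ↔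
      (∀ a ∈ L (e / w), f a ∈ L (e' / w) ∧ q' a (f a)) := by
    intro f
    exact forall₂_congr fun a ha => and_congr_right fun hb => hq a ha _ hb
  simp only [k1, k2]

end pres

/-- points of the base poset -/
inductive Pt : Type
  | bot (c : ℕ)
  | pad (c : ℕ)
  | elt (n : ℕ)
  | top (c : ℕ)

instance : Inhabited Pt := ⟨Pt.bot 0⟩

/-- order of the base poset -/
def le (r : ℕ → ℕ → Prop) : Pt → Pt → Prop
  | .bot a, .bot b => a = b
  | .bot _, .pad _ => True
  | .bot _, .elt _ => True
  | .bot _, .top _ => True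
  | .pad _, .bot _ => False
  | .pad a, .pad b => a = b
  | .pad _, .elt _ => False
  | .pad _, .top _ => True
  | .elt _, .bot _ => False
  | .elt _, .pad _ => False
  | .elt a, .elt b => r a b
  | .elt _, .top _ => True
  | .top _, .bot _ => False
  | .top _, .pad _ => False
  | .top _, .elt _ => False
  | .top a, .top b => a = b

theorem le_po {r : ℕ → ℕ → Prop} (hr : PO r) : PO (le r) where
  refl := by
    intro a
    cases a <;> simp [le, hr.refl]
  trans := by
    intro a b c
    cases a <;> cases b <;> cases c <;> simp only [le] <;> intro h1 h2 <;>
      first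
      | trivial
      | exact h1.trans h2
      | exact hr.trans _ _ _ h1 h2
  antisymm := by
    intro a b
    cases a <;> cases b <;> simp only [le] <;> intro h1 h2 <;>
      first
      | exact h1.elim
      | exact h2.elim
      | rw [h1]
      | rw [hr.antisymm _ _ h1 h2]

/-- recursion on the history of the presentation -/
noncomputable def hist {α : Type} [Inhabited α]
    (step : (ℕ → ℕ → Prop) → ℕ → (ℕ → α) → α) (r : ℕ → ℕ → Prop) (n : ℕ) : α :=
  step (truncRel r n) n (fun m => if _h : m < n then hist step r m else default)
termination_by n

theorem trunc_trunc (r : ℕ → ℕ → Prop) {m n : ℕ} (h : m ≤ n) :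
    truncRel (truncRel r n) m = truncRel r m := by
  funext a b
  simp only [truncRel, eq_iff_iff]
  constructor
  · rintro ⟨h1, h2, -, -, h3⟩
    exact ⟨h1, h2, h3⟩
  · rintro ⟨h1, h2, h3⟩
    exact ⟨h1, h2, by omega, by omega, h3⟩

theorem hist_local {α : Type} [Inhabited α]
    (step : (ℕ → ℕ → Prop) → ℕ → (ℕ → α) → α) (r : ℕ → ℕ → Prop) (N n : ℕ) (h : n ≤ N) :
    hist step (truncRel r N) n = hist step r n := by
  induction n using Nat.strong_induction_on with
  | _ n ih =>
    rw [hist, hist, trunc_trunc r h]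
    congr 1
    funext m
    by_cases hm : m < n
    · simp only [hm, dif_pos]
      exact ih m hm (by omega)
    · simp only [hm, dif_neg, not_false_iff]

/-- rank of the new element -/
noncomputable def rankStep (q : ℕ → ℕ → Prop) (n : ℕ) (prev : ℕ → ℕ) : ℕ :=
  sInf {i | ∀ j, i ≤ j → ∀ A : Finset ℕ, (∀ m ∈ A, (m < n ∧ prev m ≤ j) ∨ m = n) →
    AC q A → A.card ≤ j}

/-- rank of an element -/
noncomputable def rank (r : ℕ → ℕ → Prop) (n : ℕ) : ℕ := hist rankStep r n

theorem rank_eq (r : ℕ → ℕ → Prop) (n : ℕ) : rank r n =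
    sInf {i | ∀ j, i ≤ j → ∀ A : Finset ℕ, (∀ m ∈ A, (m < n ∧ rank r m ≤ j) ∨ m = n) →
      AC r A → A.card ≤ j} := by
  unfold rank
  rw [hist, rankStep]
  congr 1
  ext i
  simp only [Set.mem_ofPred_eq]
  refine forall₃_congr fun j _ A => ?_
  have h1 : (∀ m ∈ A, (m < n ∧ (if _h : m < n then hist rankStep r m else default) ≤ j) ∨ m = n) ↔
      (∀ m ∈ A, (m < n ∧ hist rankStep r m ≤ j) ∨ m = n) := by
    refine forall₂_congr fun m _ => or_congr_left (and_congr_right fun h => ?_)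
    simp only [h, dif_pos]
  rw [h1]
  refine forall_congr' fun hA => ?_
  have hle : ∀ m ∈ A, m ≤ n := fun m hm => by
    rcases hA m hm with h | h <;> omega
  have h2 : AC (truncRel r n) A ↔ AC r A := by
    unfold AC truncRel
    refine forall₂_congr fun a ha => forall₂_congr fun b hb => ?_
    simp only [hle a ha, hle b hb, true_and]
  rw [h2]

section rank
variable {r : ℕ → ℕ → Prop} {w : ℕ}

theorem rank_mem
    (hw : ∀ A : Finset ℕ, AC r A → A.card ≤ w) (n : ℕ) : ∀ j, rank r n ≤ j → ∀ A : Finset ℕ,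
    (∀ m ∈ A, (m < n ∧ rank r m ≤ j) ∨ m = n) → AC r A → A.card ≤ j := by
  have := Nat.sInf_mem (s := {i | ∀ j, i ≤ j → ∀ A : Finset ℕ,
    (∀ m ∈ A, (m < n ∧ rank r m ≤ j) ∨ m = n) → AC r A → A.card ≤ j})
    ⟨w, fun j hj A _ hA => (hw A hA).trans hj⟩
  rw [← rank_eq] at this
  exact this

theorem rank_le
    (hw : ∀ A : Finset ℕ, AC r A → A.card ≤ w) (n : ℕ) : rank r n ≤ w := by
  rw [rank_eq]
  exact Nat.sInf_le fun j hj A _ hA => (hw A hA).trans hj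

theorem rank_pos
    (hw : ∀ A : Finset ℕ, AC r A → A.card ≤ w) (n : ℕ) : 0 < rank r n := by
  by_contra h
  have := rank_mem hw n 0 (by omega) {n} (by simp) (by
    intro a ha b hb _
    rw [Finset.mem_singleton] at ha hb
    rw [ha, hb])
  simp at this

theorem rank_width
    (hw : ∀ A : Finset ℕ, AC r A → A.card ≤ w) (j : ℕ) (A : Finset ℕ) (hA : ∀ m ∈ A, rank r m ≤ j) (hac : AC r A) :
    A.card ≤ j := by
  rcases A.eq_empty_or_nonempty with rfl | hne
  · simp
  · have hmax := A.max'_mem hne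
    apply rank_mem hw (A.max' hne) j (hA _ hmax) A _ hac
    intro m hm
    rcases (A.le_max' m hm).lt_or_eq with h | h
    · exact Or.inl ⟨h, hA m hm⟩
    · exact Or.inr h

theorem rank_anti
    (hw : ∀ A : Finset ℕ, AC r A → A.card ≤ w) (n : ℕ) : ∃ S : Finset ℕ, (∀ m ∈ S, m ≤ n ∧ rank r m ≤ rank r n) ∧ AC r S ∧
    S.card = rank r n ∧ n ∈ S := by
  have hpos := rank_pos hw n
  have h := Nat.notMem_of_lt_sInf (s := {i | ∀ j, i ≤ j → ∀ A : Finset ℕ,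
    (∀ m ∈ A, (m < n ∧ rank r m ≤ j) ∨ m = n) → AC r A → A.card ≤ j}) (m := rank r n - 1) (by
      rw [← rank_eq]; omega)
  simp only [Set.mem_ofPred_eq] at h
  push Not at h
  obtain ⟨j, hj, A, hA, hac, hcard⟩ := h
  have hj' : j = rank r n - 1 := by
    by_contra hne
    have := rank_mem hw n j (by omega) A hA hac
    omega
  have hsub : ∀ m ∈ A, m ≤ n ∧ rank r m ≤ rank r n := by
    intro m hm
    rcases hA m hm with h | rfl
    · omega
    · exact ⟨le_refl _, le_refl _⟩
  refine ⟨A, hsub, hac, ?_, ?_⟩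
  · have := rank_width hw (rank r n) A (fun m hm => (hsub m hm).2) hac
    omega
  · by_contra hn
    have := rank_width hw j A (fun m hm => by
      rcases hA m hm with h | rfl
      · exact h.2
      · exact absurd hm hn) hac
    omega

end rank

open Classical in
/-- bottom level -/
noncomputable def bots (w : ℕ) : Finset Pt := (Finset.range w).image Pt.bot

open Classical in
/-- top level -/
noncomputable def tops (w : ℕ) : Finset Pt := (Finset.range w).image Pt.top

/-- levels with the bottom and the top level added -/
noncomputable def Lof (w : ℕ) (prev : ℕ → Finset Pt) : ℕ → Finset Pt
  | 0 => bots w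
  | 1 => tops w
  | t + 2 => prev t

/-- points available at time `n` -/
def dom (r : ℕ → ℕ → Prop) (w i n : ℕ) : Pt → Prop
  | .bot c => c < w
  | .pad c => i ≤ c ∧ c < w
  | .elt m => m ≤ n ∧ rank r m ≤ i
  | .top c => c < w

/-- all points -/
def domAll (r : ℕ → ℕ → Prop) (w i : ℕ) : Pt → Prop
  | .bot c => c < w
  | .pad c => i ≤ c ∧ c < w
  | .elt m => rank r m ≤ i
  | .top c => c < w

theorem dom_all {r : ℕ → ℕ → Prop} {w i n : ℕ} {a : Pt} (h : dom r w i n a) :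
    domAll r w i a := by
  cases a <;> simp only [dom, domAll] at h ⊢
  · exact h
  · exact h
  · exact h.2
  · exact h

theorem dom_mono {r : ℕ → ℕ → Prop} {w i n n' : ℕ} (hn : n ≤ n') {a : Pt} (h : dom r w i n a) :
    dom r w i n' a := by
  cases a <;> simp only [dom] at h ⊢
  · exact h
  · exact h
  · exact ⟨h.1.trans hn, h.2⟩
  · exact h

theorem dom_trunc (r : ℕ → ℕ → Prop) (w i n : ℕ) :
    dom (truncRel r n) w i n = dom r w i n := by
  funext a
  cases a <;> simp only [dom]
  rename_i m
  simp only [eq_iff_iff]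
  refine and_congr_right fun h => ?_
  rw [rank, hist_local _ _ _ _ h, ← rank]

theorem le_trunc {r : ℕ → ℕ → Prop} {w i n : ℕ} {a b : Pt} (ha : dom r w i n a)
    (hb : dom r w i n b) : le (truncRel r n) a b ↔ le r a b := by
  cases a <;> cases b <;> simp only [le]
  simp only [dom] at ha hb
  simp only [truncRel, ha.1, hb.1, true_and]

theorem ma_trunc (r : ℕ → ℕ → Prop) (w i n : ℕ) (A : Finset Pt) :
    MA (le (truncRel r n)) (dom (truncRel r n) w i n) w A ↔ MA (le r) (dom r w i n) w A := by
  rw [dom_trunc]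
  constructor
  · rintro ⟨h1, h2, h3⟩
    exact ⟨h1, h2, fun a ha b hb hab => h3 a ha b hb ((le_trunc (h1 a ha) (h1 b hb)).2 hab)⟩
  · rintro ⟨h1, h2, h3⟩
    exact ⟨h1, h2, fun a ha b hb hab => h3 a ha b hb ((le_trunc (h1 a ha) (h1 b hb)).1 hab)⟩

theorem cmp_trunc {r : ℕ → ℕ → Prop} {w i n : ℕ} {A B : Finset Pt}
    (hA : ∀ a ∈ A, dom r w i n a) (hB : ∀ a ∈ B, dom r w i n a) :
    Cmp (le (truncRel r n)) A B ↔ Cmp (le r) A B := by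
  unfold Cmp Sq
  refine or_congr ?_ ?_
  · exact forall₂_congr fun a ha => exists_congr fun b => and_congr_right fun hb =>
      le_trunc (hA a ha) (hB b hb)
  · exact forall₂_congr fun a ha => exists_congr fun b => and_congr_right fun hb =>
      le_trunc (hB a ha) (hA b hb)

/-- admissible new level -/
def Good (w i : ℕ) (q : ℕ → ℕ → Prop) (n : ℕ) (prev : ℕ → Finset Pt) (A : Finset Pt) : Prop :=
  Pt.elt n ∈ A ∧ MA (le q) (dom q w i n) w A ∧ ∀ t < n + 2, Cmp (le q) A (Lof w prev t)

open Classical in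
/-- the new level -/
noncomputable def levStep (w i : ℕ) (q : ℕ → ℕ → Prop) (n : ℕ) (prev : ℕ → Finset Pt) :
    Finset Pt :=
  if rank q n = i then Classical.epsilon (Good w i q n prev) else bots w

/-- the level created at time `n` -/
noncomputable def lev (w i : ℕ) (r : ℕ → ℕ → Prop) (n : ℕ) : Finset Pt := hist (levStep w i) r n

/-- the sequence of levels -/
noncomputable def LL (w i : ℕ) (r : ℕ → ℕ → Prop) : ℕ → Finset Pt := Lof w (lev w i r)

theorem LL_local (w i : ℕ) (r : ℕ → ℕ → Prop) (n t : ℕ) (h : t ≤ n + 2) :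
    LL w i (truncRel r n) t = LL w i r t := by
  match t, h with
  | 0, _ => rfl
  | 1, _ => rfl
  | t + 2, h =>
    simp only [LL, Lof, lev]
    exact hist_local _ _ _ _ (by omega)

section main
variable {r : ℕ → ℕ → Prop} {w i : ℕ}

theorem mem_bots {a : Pt} : a ∈ bots w ↔ ∃ c < w, Pt.bot c = a := by
  simp [bots]

theorem mem_tops {a : Pt} : a ∈ tops w ↔ ∃ c < w, Pt.top c = a := by
  simp [tops]

theorem bots_ma (n : ℕ) : MA (le r) (dom r w i n) w (bots w) := by
  classical
  refine ⟨?_, ?_, ?_⟩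
  · intro a ha
    obtain ⟨c, hc, rfl⟩ := mem_bots.1 ha
    exact hc
  · rw [bots, Finset.card_image_of_injective _ (fun a b h => by simpa using h),
      Finset.card_range]
  · intro a ha b hb hab
    obtain ⟨c, hc, rfl⟩ := mem_bots.1 ha
    obtain ⟨d, hd, rfl⟩ := mem_bots.1 hb
    simp only [le] at hab
    rw [hab]

theorem tops_ma (n : ℕ) : MA (le r) (dom r w i n) w (tops w) := by
  classical
  refine ⟨?_, ?_, ?_⟩
  · intro a ha
    obtain ⟨c, hc, rfl⟩ := mem_tops.1 ha
    exact hc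
  · rw [tops, Finset.card_image_of_injective _ (fun a b h => by simpa using h),
      Finset.card_range]
  · intro a ha b hb hab
    obtain ⟨c, hc, rfl⟩ := mem_tops.1 ha
    obtain ⟨d, hd, rfl⟩ := mem_tops.1 hb
    simp only [le] at hab
    rw [hab]

theorem ma_mono {n n' : ℕ} (hn : n ≤ n') {A : Finset Pt} (h : MA (le r) (dom r w i n) w A) :
    MA (le r) (dom r w i n') w A :=
  ⟨fun a ha => dom_mono hn (h.sub a ha), h.card, h.ac⟩

theorem ma_all {n : ℕ} {A : Finset Pt} (h : MA (le r) (dom r w i n) w A) :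
    MA (le r) (domAll r w i) w A :=
  ⟨fun a ha => dom_all (h.sub a ha), h.card, h.ac⟩

theorem dom_width (hw : ∀ A : Finset ℕ, AC r A → A.card ≤ w) (hi : i ≤ w) :
    Wd (le r) (domAll r w i) w := by
  classical
  intro A hA hac
  by_cases h1 : ∃ c, Pt.bot c ∈ A
  · obtain ⟨c, hc⟩ := h1
    rw [← (bots_ma (r := r) (w := w) (i := i) 0).card]
    apply Finset.card_le_card
    intro a ha
    have hd := hA a ha
    have := hac _ hc a ha
    cases a <;> simp [le] at this
    exact mem_bots.2 ⟨_, hd, rfl⟩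
  by_cases h2 : ∃ c, Pt.top c ∈ A
  · obtain ⟨c, hc⟩ := h2
    rw [← (tops_ma (r := r) (w := w) (i := i) 0).card]
    apply Finset.card_le_card
    intro a ha
    have hd := hA a ha
    have := hac a ha _ hc
    cases a <;> simp [le] at this
    exact mem_tops.2 ⟨_, hd, rfl⟩
  have hinj : Function.Injective Pt.elt := fun a b h => by simpa using h
  have hsub : A ⊆ (Finset.Ico i w).image Pt.pad ∪ (A.preimage Pt.elt hinj.injOn).image Pt.elt := by
    intro a ha
    have hd := hA a ha
    cases a with
    | bot c => exact absurd ⟨c, ha⟩ h1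
    | top c => exact absurd ⟨c, ha⟩ h2
    | pad c =>
      simp only [domAll] at hd
      simp [hd]
    | elt m => simp [ha]
  have c1 := Finset.card_le_card hsub
  have c2 := Finset.card_union_le ((Finset.Ico i w).image Pt.pad)
    ((A.preimage Pt.elt hinj.injOn).image Pt.elt)
  have c3 : ((Finset.Ico i w).image Pt.pad).card ≤ w - i := by
    simpa using Finset.card_image_le (s := Finset.Ico i w) (f := Pt.pad)
  have c4 := Finset.card_image_le (s := A.preimage Pt.elt hinj.injOn) (f := Pt.elt)
  have c5 := rank_width hw i (A.preimage Pt.elt hinj.injOn) (fun m hm => by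
    rw [Finset.mem_preimage] at hm
    exact hA _ hm) (fun a ha b hb hab => by
    rw [Finset.mem_preimage] at ha hb
    exact hinj (hac _ ha _ hb hab))
  omega

theorem exists_start (hw : ∀ A : Finset ℕ, AC r A → A.card ≤ w) {n : ℕ} (hi : rank r n = i) :
    ∃ A, MA (le r) (dom r w i n) w A ∧ Pt.elt n ∈ A := by
  classical
  obtain ⟨S, hS, hac, hcard, hn⟩ := rank_anti hw n
  have hiw := rank_le hw n
  rw [hi] at hS hcard hiw
  refine ⟨(Finset.Ico i w).image Pt.pad ∪ S.image Pt.elt, ⟨?_, ?_, ?_⟩, by simp [hn]⟩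
  · intro a ha
    rcases Finset.mem_union.1 ha with ha | ha
    · obtain ⟨c, hc, rfl⟩ := Finset.mem_image.1 ha
      exact Finset.mem_Ico.1 hc
    · obtain ⟨m, hm, rfl⟩ := Finset.mem_image.1 ha
      exact hS m hm
  · rw [Finset.card_union_of_disjoint, Finset.card_image_of_injective _ (fun a b h => by simpa using h),
      Finset.card_image_of_injective _ (fun a b h => by simpa using h), Nat.card_Ico, hcard]
    · omega
    · rw [Finset.disjoint_left]
      intro a ha ha'
      obtain ⟨c, hc, rfl⟩ := Finset.mem_image.1 ha
      simp at ha'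
  · intro a ha b hb hab
    rcases Finset.mem_union.1 ha with ha | ha <;> rcases Finset.mem_union.1 hb with hb | hb <;>
      obtain ⟨c, hc, rfl⟩ := Finset.mem_image.1 ha <;>
      obtain ⟨d, hd, rfl⟩ := Finset.mem_image.1 hb <;> simp only [le] at hab
    · rw [hab]
    · rw [hac c hc d hd hab]

theorem sq_bots (hq : PO (le r)) (hw : Wd (le r) (domAll r w i) w) {A : Finset Pt}
    (hA : MA (le r) (domAll r w i) w A) : Sq (le r) (bots w) A := by
  have hb := ma_all (bots_ma (r := r) (w := w) (i := i) 0)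
  refine (sq_flip hq hw hb hA).1 ?_
  intro a ha
  have hd := hA.sub a ha
  have hne : ∃ b, b ∈ bots w := by
    have : (bots w).card = A.card := by rw [hb.card, hA.card]
    have h2 := Finset.card_pos.2 ⟨a, ha⟩
    rw [← this] at h2
    exact Finset.card_pos.1 h2
  obtain ⟨b, hb⟩ := hne
  cases a with
  | bot c => exact ⟨.bot c, mem_bots.2 ⟨c, hd, rfl⟩, rfl⟩
  | pad c =>
    obtain ⟨d, _, rfl⟩ := mem_bots.1 hb
    exact ⟨_, hb, trivial⟩
  | elt c =>
    obtain ⟨d, _, rfl⟩ := mem_bots.1 hb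
    exact ⟨_, hb, trivial⟩
  | top c =>
    obtain ⟨d, _, rfl⟩ := mem_bots.1 hb
    exact ⟨_, hb, trivial⟩

theorem sq_tops (hpos : 0 < w) {A : Finset Pt}
    (hA : MA (le r) (domAll r w i) w A) : Sq (le r) A (tops w) := by
  intro a ha
  have hd := hA.sub a ha
  have h0 : Pt.top 0 ∈ tops w := mem_tops.2 ⟨0, hpos, rfl⟩
  cases a with
  | bot c => exact ⟨_, h0, trivial⟩
  | pad c => exact ⟨_, h0, trivial⟩
  | elt c => exact ⟨_, h0, trivial⟩
  | top c => exact ⟨.top c, mem_tops.2 ⟨c, hd, rfl⟩, rfl⟩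

theorem lev_spec (hr : PO r) (hw : ∀ A : Finset ℕ, AC r A → A.card ≤ w) (hpos : 0 < w)
    (hi : i ≤ w) (n : ℕ) :
    MA (le r) (dom r w i n) w (lev w i r n) ∧ (rank r n = i → Pt.elt n ∈ lev w i r n) ∧
      (∀ t < n + 2, Cmp (le r) (lev w i r n) (LL w i r t)) ∧ lev w i r n ≠ tops w := by
  have hq := le_po hr
  have hW := dom_width hw hi
  induction n using Nat.strong_induction_on with
  | _ n ih =>
    have hprev : ∀ t < n + 2, MA (le r) (dom r w i n) w (LL w i r t) := by
      intro t ht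
      match t, ht with
      | 0, _ => exact bots_ma n
      | 1, _ => exact tops_ma n
      | t + 2, ht => exact ma_mono (by omega) (ih t (by omega)).1
    have hcmp' : ∀ s < n + 2, ∀ t < n + 2, t < s → Cmp (le r) (LL w i r s) (LL w i r t) := by
      intro s hs t ht hts
      match s, hs, hts with
      | 1, _, _ => exact Or.inr (sq_tops hpos (ma_all (hprev t ht)))
      | s + 2, hs, hts => exact (ih s (by omega)).2.2.1 t hts
    have hcmp : ∀ s < n + 2, ∀ t < n + 2, Cmp (le r) (LL w i r s) (LL w i r t) := by
      intro s hs t ht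
      rcases lt_trichotomy s t with h | h | h
      · exact (hcmp' t ht s hs h).symm
      · rw [h]
        exact Or.inl fun a ha => ⟨a, ha, hq.refl a⟩
      · exact hcmp' s hs t ht h
    have hrk : rank (truncRel r n) n = rank r n := hist_local _ _ _ _ (le_refl n)
    by_cases hin : rank r n = i
    · set prev : ℕ → Finset Pt := fun m => if _h : m < n then lev w i r m else default with hp
      have hLof : ∀ t < n + 2, Lof w prev t = LL w i r t := by
        intro t ht
        match t, ht with
        | 0, _ => rfl
        | 1, _ => rfl
        | t + 2, ht =>
          have : t < n := by omega
          simp [Lof, LL, hp, this]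
      have hgood : ∀ A, Good w i (truncRel r n) n prev A ↔ (Pt.elt n ∈ A ∧
          MA (le r) (dom r w i n) w A ∧ ∀ t < n + 2, Cmp (le r) A (LL w i r t)) := by
        intro A
        unfold Good
        rw [ma_trunc]
        refine and_congr_right fun _ => and_congr_right fun hA => forall₂_congr fun t ht => ?_
        rw [hLof t ht]
        exact cmp_trunc hA.sub (hprev t ht).sub
      have heq : lev w i r n = Classical.epsilon (Good w i (truncRel r n) n prev) := by
        rw [lev, hist, levStep, if_pos (hrk.trans hin)]
        rfl
      obtain ⟨A, hA, hnA⟩ := exists_start hw hin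
      obtain ⟨M, hM1, hM2, hM3⟩ := insertion hq
        (fun B hB hac => hW B (fun b hb => dom_all (hB b hb)) hac) (LL w i r) hA hnA (n + 2)
        hprev hcmp
      have hspec := (hgood _).1 (Classical.epsilon_spec ⟨M, (hgood M).2 ⟨hM2, hM1, hM3⟩⟩)
      rw [← heq] at hspec
      refine ⟨hspec.2.1, fun _ => hspec.1, hspec.2.2, fun h => ?_⟩
      have h2 := hspec.1
      rw [h] at h2
      obtain ⟨c, _, hc⟩ := mem_tops.1 h2
      cases hc
    · have heq : lev w i r n = bots w := by
        rw [lev, hist, levStep, if_neg (by rw [hrk]; exact hin)]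
      rw [heq]
      refine ⟨bots_ma n, fun h => absurd h hin, fun t ht =>
        Or.inl (sq_bots hq hW (ma_all (hprev t ht))), fun h => ?_⟩
      have h2 : Pt.bot 0 ∈ bots w := mem_bots.2 ⟨0, hpos, rfl⟩
      rw [h] at h2
      obtain ⟨c, _, hc⟩ := mem_tops.1 h2
      cases hc

theorem LL_dom (hr : PO r) (hw : ∀ A : Finset ℕ, AC r A → A.card ≤ w) (hpos : 0 < w)
    (hi : i ≤ w) {n t : ℕ} (ht : t ≤ n + 2) : MA (le r) (dom r w i n) w (LL w i r t) := by
  match t, ht with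
  | 0, _ => exact bots_ma n
  | 1, _ => exact tops_ma n
  | t + 2, ht => exact ma_mono (by omega) (lev_spec hr hw hpos hi t).1

theorem LL_LS (hr : PO r) (hw : ∀ A : Finset ℕ, AC r A → A.card ≤ w) (hpos : 0 < w)
    (hi : i ≤ w) : LS (le r) (domAll r w i) w (LL w i r) := by
  have hq := le_po hr
  have hW := dom_width hw hi
  have hma : ∀ t, MA (le r) (domAll r w i) w (LL w i r t) := fun t =>
    ma_all (LL_dom hr hw hpos hi (n := t) (by omega))
  have hcmp' : ∀ s t, t < s → Cmp (le r) (LL w i r s) (LL w i r t) := by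
    intro s t hts
    match s, hts with
    | 1, _ => exact Or.inr (sq_tops hpos (hma t))
    | s + 2, hts => exact (lev_spec hr hw hpos hi s).2.2.1 t hts
  refine ⟨hpos, hq, hW, hma, ?_, fun t => sq_bots hq hW (hma t), fun t => sq_tops hpos (hma t),
    ?_, ?_⟩
  · intro s t
    rcases lt_trichotomy s t with h | h | h
    · exact (hcmp' t s h).symm
    · rw [h]
      exact Or.inl fun a ha => ⟨a, ha, hq.refl a⟩
    · exact hcmp' s t h
  · intro t ht
    match t, ht with
    | 0, _ =>
      intro h
      have h2 : Pt.bot 0 ∈ bots w := mem_bots.2 ⟨0, hpos, rfl⟩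
      have h : bots w = tops w := h
      rw [h] at h2
      obtain ⟨c, _, hc⟩ := mem_tops.1 h2
      cases hc
    | t + 2, _ => exact (lev_spec hr hw hpos hi t).2.2.2
  · intro x hx y hy
    obtain ⟨c, _, rfl⟩ := mem_bots.1 hx
    obtain ⟨d, _, rfl⟩ := mem_tops.1 hy
    trivial

end main

/-- the representing element of `n` in the regular presentation -/
noncomputable def rep (w : ℕ) (r : ℕ → ℕ → Prop) (n : ℕ) : ℕ :=
  el w (LL w (rank r n) r) (n + 2) (Pt.elt n)

/-- the colour used by the regular algorithm -/
noncomputable def bcol (B : (ℕ → ℕ → Prop) → ℕ → ℕ) (w : ℕ) (r : ℕ → ℕ → Prop) (n : ℕ) : ℕ :=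
  B (truncRel (RR (le r) w (LL w (rank r n) r)) ((n + 2 + 1) * w - 1)) (rep w r n)

/-- the on-line algorithm -/
noncomputable def alg (B : (ℕ → ℕ → Prop) → ℕ → ℕ) (w k : ℕ) (r : ℕ → ℕ → Prop) (n : ℕ) : ℕ :=
  (rank r n - 1) * k + bcol B w r n

theorem alg_local {B : (ℕ → ℕ → Prop) → ℕ → ℕ} {w k : ℕ} {r : ℕ → ℕ → Prop} (hr : PO r)
    (hw : ∀ A : Finset ℕ, AC r A → A.card ≤ w) (hpos : 0 < w) (n : ℕ) :
    alg B w k (truncRel r n) n = alg B w k r n := by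
  have hrk : rank (truncRel r n) n = rank r n := hist_local _ _ _ _ (le_refl n)
  have hi := rank_le hw n
  unfold alg bcol rep
  rw [hrk]
  have h1 : el w (LL w (rank r n) (truncRel r n)) (n + 2) (Pt.elt n) =
      el w (LL w (rank r n) r) (n + 2) (Pt.elt n) := by
    unfold el
    rw [LL_local _ _ _ _ _ (le_refl _)]
  have h2 : truncRel (RR (le (truncRel r n)) w (LL w (rank r n) (truncRel r n)))
      ((n + 2 + 1) * w - 1) = truncRel (RR (le r) w (LL w (rank r n) r))
      ((n + 2 + 1) * w - 1) := by
    funext a b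
    simp only [truncRel, eq_iff_iff]
    have hp : 0 < (n + 2 + 1) * w := by positivity
    have hdiv : ∀ a, a ≤ (n + 2 + 1) * w - 1 → a / w ≤ n + 2 := by
      intro a ha
      have : a / w < n + 2 + 1 := by
        rw [Nat.div_lt_iff_lt_mul hpos]
        omega
      omega
    refine and_congr_right fun ha => and_congr_right fun hb => ?_
    refine RR_congr (N := n + 2) (fun t ht => LL_local _ _ _ _ _ ht) ?_ (hdiv a ha) (hdiv b hb)
    intro s hs t ht x hx y hy
    rw [LL_local _ _ _ _ _ hs] at hx
    rw [LL_local _ _ _ _ _ ht] at hy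
    exact le_trunc ((LL_dom hr hw hpos hi hs).sub x hx) ((LL_dom hr hw hpos hi ht).sub y hy)
  rw [h1, h2]

end OC

/-- Lemma 2: `val(w) ≤ w · regval(w)`. If some on-line algorithm partitions every
regular poset of width `w` into at most `k` chains, then some on-line algorithm
partitions every poset of width `w` into at most `w·k` chains. -/
theorem stmt9 (w k : ℕ) (h : ∃ B, SolvesRegular B w k) :
    ∃ A, SolvesOnline A w (w * k) := by
  obtain ⟨B, hB⟩ := h
  refine ⟨OC.alg B w k, ?_⟩
  intro r hr hwid
  have hpo : OC.PO r := ⟨hr.refl, hr.trans, hr.antisymm⟩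
  have hw : ∀ A : Finset ℕ, OC.AC r A → A.card ≤ w := by
    intro A hA
    apply hwid A
    intro i hi j hj hne
    exact ⟨fun h => hne (hA i hi j hj h), fun h => hne (hA j hj i hi h).symm⟩
  have hpos : 0 < w := lt_of_lt_of_le (OC.rank_pos hw 0) (OC.rank_le hw 0)
  simp only [OC.alg_local hpo hw hpos]
  have hLS : ∀ i, i ≤ w → OC.LS (OC.le r) (OC.domAll r w i) w (OC.LL w i r) := fun i hi =>
    OC.LL_LS hpo hw hpos hi
  have hcol := fun i (hi : i ≤ w) => hB _ (OC.RR_po (hLS i hi)) (OC.RR_regular (hLS i hi))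
  have hmem : ∀ n, OC.Pt.elt n ∈ OC.LL w (OC.rank r n) r (n + 2) := fun n =>
    (OC.lev_spec hpo hw hpos (OC.rank_le hw n) n).2.1 rfl
  have hdiv : ∀ n, OC.rep w r n / w = n + 2 := fun n =>
    OC.el_div (hLS _ (OC.rank_le hw n)) (hmem n)
  have hpt : ∀ n, OC.pt w (OC.LL w (OC.rank r n) r) (OC.rep w r n) = OC.Pt.elt n := fun n =>
    OC.pt_el (hLS _ (OC.rank_le hw n)) (hmem n)
  have hb : ∀ n, OC.bcol B w r n = B (truncRel (OC.RR (OC.le r) w (OC.LL w (OC.rank r n) r))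
      ((OC.rep w r n / w + 1) * w - 1)) (OC.rep w r n) := fun n => by
    rw [hdiv]
    rfl
  have hbk : ∀ n, OC.bcol B w r n < k := fun n => by
    rw [hb]
    exact (hcol _ (OC.rank_le hw n)).1 (OC.rep w r n)
  constructor
  · intro n
    have h1 := OC.rank_pos hw n
    have h2 := OC.rank_le hw n
    have h3 := hbk n
    have h4 : (OC.rank r n - 1 + 1) * k ≤ w * k := Nat.mul_le_mul_right k (by omega)
    rw [Nat.add_mul, Nat.one_mul] at h4
    show (OC.rank r n - 1) * k + OC.bcol B w r n < w * k
    omega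
  · intro n m hnm
    have hnm : (OC.rank r n - 1) * k + OC.bcol B w r n =
      (OC.rank r m - 1) * k + OC.bcol B w r m := hnm
    have hk : 0 < k := lt_of_le_of_lt (Nat.zero_le _) (hbk n)
    have e1 := congrArg (· / k) hnm
    have e2 := congrArg (· % k) hnm
    simp only [mul_comm _ k, Nat.mul_add_div hk, Nat.mul_add_mod, Nat.div_eq_of_lt (hbk _),
      Nat.mod_eq_of_lt (hbk _)] at e1 e2
    have p1 := OC.rank_pos hw n
    have p2 := OC.rank_pos hw m
    have hrk : OC.rank r m = OC.rank r n := by omega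
    have hptm := hpt m
    rw [hb, hb, hrk] at e2
    rw [hrk] at hptm
    have H := hLS _ (OC.rank_le hw n)
    rcases (hcol _ (OC.rank_le hw n)).2 _ _ e2 with h | h | h
    · have := OC.RR_imp H h
      rw [hpt n, hptm] at this
      exact Or.inl this
    · have := OC.RR_imp H h
      rw [hpt n, hptm] at this
      exact Or.inr (Or.inl this)
    · right; right
      have h1 := hdiv n
      rw [h, hdiv m] at h1
      omega
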